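/- Every K₃,₃-minor-free graph G has a planar partition of width 2 with at most (|V(G)| − 2)/3 bags of cardinality 2 (all other bags are singletons). That is, there is a partition of V(G) into parts of size at most 2 such that the quotient graph (identify each part to a vertex, delete loops, merge parallel edges) is planar, and at most (|V(G)| − 2)/3 parts have size 2. -/

import Mathlib

open SimpleGraph

/-- `H` is a minor of `G`: there are pairwise disjoint nonempty connected branch sets
in `G`, one for each vertex of `H`, with an edge of `G` between the branch sets of any
two adjacent vertices of `H`. -/
def IsMinor {α β : Type*} (H : SimpleGraph α) (G : SimpleGraph β) : Prop :=
  ∃ f : α → Set β,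
    (∀ a, (f a).Nonempty) ∧
    (∀ a, (G.induce (f a)).Connected) ∧
    (Pairwise fun a b => Disjoint (f a) (f b)) ∧
    ∀ a b, H.Adj a b → ∃ u ∈ f a, ∃ v ∈ f b, G.Adj u v

/-- A graph is planar iff it has no `K₅` minor and no `K₃,₃` minor (Wagner's theorem). -/
def Planar {β : Type*} (G : SimpleGraph β) : Prop :=
  ¬ IsMinor (⊤ : SimpleGraph (Fin 5)) G ∧
  ¬ IsMinor (completeBipartiteGraph (Fin 3) (Fin 3)) G

/-!
A `K₃₃`-minor-free graph that is not planar has a `K₅`-minor; choose a model of it that cannot be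
enlarged. Splitting a branch set into two connected halves that each see two further branch sets
would produce a `K₃₃`-minor, so every branch set has a center, a vertex whose removal leaves only
parts that see a single other branch set. Hence either the centers are all the non-isolated
vertices, and there are five of them, or the graph is a union `G₁ ∪ G₂` of two graphs sharing at
most two vertices `x` and `y`.

In the first case identifying two vertices suffices. In the second, `xy` may be added to both
sides, since the other side supplies a path from `x` to `y`; both sides are treated by induction
and the results are glued along `xy`. This needs a stronger assertion: the identified pairs can be
chosen to avoid any prescribed clique of at most two vertices, which we take to be `{x, y}` on one
side. As the sides share at most two vertices, the bounds add up:
`(n₁ - 2) + (n₂ - 2) ≤ n - 2`.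
-/

local notation "K₅" => (⊤ : SimpleGraph (Fin 5))
local notation "K₃₃" => completeBipartiteGraph (Fin 3) (Fin 3)

section Connectivity

variable {ι V : Type*} {G : SimpleGraph V} {S T S' T' : Set V}

theorem connected_induce_iff_forall_subset : (G.induce S).Connected ↔ S.Nonempty ∧
    ∀ T : Set V, (S ∩ T).Nonempty → (∀ a ∈ S ∩ T, ∀ b ∈ S, G.Adj a b → b ∈ T) → S ⊆ T := by
  rw [connected_iff, Set.nonempty_coe_sort, and_comm]
  refine and_congr_right fun _ => ⟨?_, fun h u v => ?_⟩
  · rintro h T ⟨a, haS, haT⟩ hT b hb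
    obtain ⟨p⟩ := h ⟨a, haS⟩ ⟨b, hb⟩
    suffices ∀ u v : S, (G.induce S).Walk u v → (u : V) ∈ T → (v : V) ∈ T from this _ _ p haT
    intro u v p hu
    induction p with
    | nil => exact hu
    | cons huw _ ih => exact ih (hT _ ⟨Subtype.prop _, hu⟩ _ (Subtype.prop _) huw)
  · obtain ⟨_, huv⟩ := h {z | ∃ hz : z ∈ S, (G.induce S).Reachable u ⟨z, hz⟩}
      ⟨u, u.2, u.2, .rfl⟩
      (fun a ⟨_, ha, hua⟩ b hb hab => ⟨hb, hua.trans
        (show (G.induce S).Adj ⟨a, ha⟩ ⟨b, hb⟩ from hab).reachable⟩) v.2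
    exact huv

theorem nonempty_of_connected_induce (h : (G.induce S).Connected) : S.Nonempty :=
  Set.nonempty_coe_sort.1 h.nonempty

/-- Two vertex sets are adjacent in `G` if some edge of `G` joins them. -/
def SetAdj (G : SimpleGraph V) (S T : Set V) : Prop :=
  ∃ u ∈ S, ∃ v ∈ T, G.Adj u v

theorem SetAdj.symm (h : SetAdj G S T) : SetAdj G T S :=
  let ⟨u, hu, v, hv, huv⟩ := h
  ⟨v, hv, u, hu, huv.symm⟩

theorem SetAdj.mono (hS : S ⊆ S') (hT : T ⊆ T') (h : SetAdj G S T) : SetAdj G S' T' :=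
  let ⟨u, hu, v, hv, huv⟩ := h
  ⟨u, hS hu, v, hT hv, huv⟩

theorem setAdj_union_left : SetAdj G (S ∪ S') T ↔ SetAdj G S T ∨ SetAdj G S' T := by
  simp only [SetAdj, Set.mem_union, or_and_right, exists_or]

theorem connected_induce_union_of_setAdj (hS : (G.induce S).Connected)
    (hT : (G.induce T).Connected) (h : SetAdj G S T) : (G.induce (S ∪ T)).Connected :=
  let ⟨_, hu, _, hv, huv⟩ := h
  connected_induce_union hS.preconnected hT.preconnected hu hv huv

theorem connected_induce_insert {v : V} (hS : (G.induce S).Connected) (h : SetAdj G {v} S) :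
    (G.induce (insert v S)).Connected :=
  connected_induce_union_of_setAdj (S := {v}) (by simp) hS h

theorem connected_induce_biUnion {H : SimpleGraph ι} {I : Set ι} {g : ι → Set V}
    (hI : (H.induce I).Connected) (hg : ∀ i ∈ I, (G.induce (g i)).Connected)
    (hadj : ∀ i ∈ I, ∀ j ∈ I, H.Adj i j → SetAdj G (g i) (g j)) :
    (G.induce (⋃ i ∈ I, g i)).Connected := by
  simp only [connected_induce_iff_forall_subset] at hI hg ⊢
  refine ⟨?_, fun T hT hclosed => ?_⟩
  · obtain ⟨i, hi⟩ := hI.1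
    exact (hg i hi).1.mono (Set.subset_biUnion_of_mem hi)
  have hsub : ∀ i ∈ I, (g i ∩ T).Nonempty → g i ⊆ T := fun i hi hiT =>
    (hg i hi).2 T hiT fun a ha b hb hab =>
      hclosed a ⟨Set.mem_biUnion hi ha.1, ha.2⟩ b (Set.mem_biUnion hi hb) hab
  refine Set.iUnion₂_subset (hI.2 {i | g i ⊆ T} ?_ fun i hi j hj hij => ?_)
  · obtain ⟨a, ha, haT⟩ := hT
    obtain ⟨i, hi, hai⟩ := Set.mem_iUnion₂.1 ha
    exact ⟨i, hi, hsub i hi ⟨a, hai, haT⟩⟩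
  · obtain ⟨u, hu, v, hv, huv⟩ := hadj i hi.1 j hj hij
    exact hsub j hj ⟨v, hv, hclosed u ⟨Set.mem_biUnion hi.1 hu, hi.2 hu⟩ v
      (Set.mem_biUnion hj hv) huv⟩

theorem connected_induce_sdiff {B D : Set V} {w : V} (hB : (G.induce B).Connected)
    (hw : w ∈ B) (hDB : D ⊆ B \ {w}) (hD : ¬ SetAdj G D ((B \ {w}) \ D)) :
    (G.induce (B \ D)).Connected := by
  rw [connected_induce_iff_forall_subset] at hB ⊢
  have hwD : w ∉ D := fun h => (hDB h).2 rfl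
  refine ⟨⟨w, hw, hwD⟩, fun T hT hclosed => ?_⟩
  have hDout : ∀ a ∈ D, ∀ b ∈ B, G.Adj a b → b ∈ D ∨ b = w := fun a ha b hb hab => by
    by_contra! h
    exact hD ⟨a, ha, b, ⟨⟨hb, h.2⟩, h.1⟩, hab⟩
  have hwT : w ∈ T := by
    by_contra hwT
    obtain ⟨a, ⟨haB, haD⟩, haT⟩ := hT
    refine (hB.2 (T \ D) ⟨a, haB, haT, haD⟩ (fun b hb c hc hbc => ?_) hw).1 |> hwT
    have hcD : c ∉ D := fun hcD =>
      (hDout c hcD b hb.1 hbc.symm).elim hb.2.2 fun h => hwT (h ▸ hb.2.1)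
    exact ⟨hclosed b ⟨⟨hb.1, hb.2.2⟩, hb.2.1⟩ c ⟨hc, hcD⟩ hbc, hcD⟩
  have hBTD : B ⊆ T ∪ D := hB.2 _ ⟨w, hw, .inl hwT⟩ fun b hb c hc hbc => by
    by_cases hcD : c ∈ D
    · exact .inr hcD
    by_cases hbD : b ∈ D
    · exact .inl ((hDout b hbD c hc hbc).resolve_left hcD ▸ hwT)
    · exact .inl (hclosed b ⟨⟨hb.1, hbD⟩, hb.2.resolve_right hbD⟩ c ⟨hc, hcD⟩ hbc)
  exact fun b hb => (hBTD hb.1).resolve_right hb.2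

theorem exists_connected_induce_superset_sdiff [Finite V] {B C : Set V} {w : V}
    (hB : (G.induce B).Connected) (hw : w ∈ B) (hC : (G.induce C).Connected)
    (hCB : C ⊆ B \ {w}) :
    ∃ D, C ⊆ D ∧ D ⊆ B \ {w} ∧ (G.induce D).Connected ∧ (G.induce (B \ D)).Connected := by
  obtain ⟨D, hCD, hD⟩ := (Set.toFinite {D | D ⊆ B \ {w} ∧
    (G.induce D).Connected}).exists_le_maximal ⟨hCB, hC⟩
  refine ⟨D, hCD, hD.prop.1, hD.prop.2, connected_induce_sdiff hB hw hD.prop.1 ?_⟩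
  rintro ⟨u, hu, v, hv, huv⟩
  exact hv.2 (hD.le_of_ge ⟨Set.insert_subset hv.1 hD.prop.1,
    connected_induce_insert hD.prop.2 ⟨v, rfl, u, hu, huv.symm⟩⟩ (Set.subset_insert v D)
    (Set.mem_insert v D))

theorem setAdj_sdiff_of_connected {B X : Set V} (hB : (G.induce B).Connected) (hXB : X ⊆ B)
    (hX : X.Nonempty) (hBX : (B \ X).Nonempty) : SetAdj G X (B \ X) := by
  by_contra h
  obtain ⟨b, hb, hbX⟩ := hBX
  refine hbX ((connected_induce_iff_forall_subset.1 hB).2 X (hX.mono fun _ hx => ⟨hXB hx, hx⟩)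
    (fun u hu v hv huv => by_contra fun hvX => h ⟨u, hu.2, v, ⟨hv, hvX⟩, huv⟩) hb)

end Connectivity

section Minor

variable {α β γ : Type*} {H : SimpleGraph α} {G : SimpleGraph β} {f : α → Set β}

/-- The map `f` assigns to the vertices of `H` the branch sets of an `H`-minor in `G`. -/
structure IsMinorModel (H : SimpleGraph α) (G : SimpleGraph β) (f : α → Set β) : Prop where
  connected : ∀ a, (G.induce (f a)).Connected
  disjoint : Pairwise fun a b => Disjoint (f a) (f b)
  setAdj : ∀ a b, H.Adj a b → SetAdj G (f a) (f b)

theorem isMinor_iff_exists_isMinorModel : IsMinor H G ↔ ∃ f, IsMinorModel H G f :=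
  ⟨fun ⟨f, _, hconn, hdisj, hadj⟩ => ⟨f, hconn, hdisj, hadj⟩, fun ⟨f, hf⟩ =>
    ⟨f, fun a => nonempty_of_connected_induce (hf.connected a), hf.connected, hf.disjoint,
      hf.setAdj⟩⟩

theorem IsMinorModel.isMinor (hf : IsMinorModel H G f) : IsMinor H G :=
  isMinor_iff_exists_isMinorModel.2 ⟨f, hf⟩

theorem IsMinorModel.eq_of_mem (hf : IsMinorModel H G f) {a b : α} {v : β} (ha : v ∈ f a)
    (hb : v ∈ f b) : a = b :=
  hf.disjoint.eq (Set.not_disjoint_iff.2 ⟨v, ha, hb⟩)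

theorem IsMinor.trans {G' : SimpleGraph γ} (h : IsMinor H G) (h' : IsMinor G G') :
    IsMinor H G' := by
  obtain ⟨f, hf⟩ := isMinor_iff_exists_isMinorModel.1 h
  obtain ⟨g, hg⟩ := isMinor_iff_exists_isMinorModel.1 h'
  refine IsMinorModel.isMinor (f := fun a => ⋃ b ∈ f a, g b) ⟨fun a => ?_, fun a b hab => ?_,
    fun a b hab => ?_⟩
  · exact connected_induce_biUnion (hf.connected a) (fun b _ => hg.connected b)
      fun b _ c _ => hg.setAdj b c
  · simp only [Set.disjoint_iUnion_left, Set.disjoint_iUnion_right]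
    exact fun d hd c hc => hg.disjoint fun hcd => hab (hf.eq_of_mem hc (hcd ▸ hd))
  · obtain ⟨u, hu, v, hv, huv⟩ := hf.setAdj a b hab
    exact (hg.setAdj u v huv).mono (Set.subset_biUnion_of_mem hu) (Set.subset_biUnion_of_mem hv)

theorem isMinor_of_injective_hom (φ : H →g G) (hφ : Function.Injective φ) : IsMinor H G :=
  IsMinorModel.isMinor (f := fun a => {φ a})
    ⟨fun a => by simp, fun a b hab => by simpa using hφ.ne hab,
      fun a b hab => ⟨φ a, rfl, φ b, rfl, φ.map_adj hab⟩⟩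

theorem IsMinor.mono {G' : SimpleGraph β} (hG : G ≤ G') (h : IsMinor H G) : IsMinor H G' :=
  h.trans (isMinor_of_injective_hom (.ofLE hG) Function.injective_id)

theorem IsMinor.card_le [Finite β] (h : IsMinor H G) : Nat.card α ≤ Nat.card β := by
  obtain ⟨f, hf⟩ := isMinor_iff_exists_isMinorModel.1 h
  choose g hg using fun a => nonempty_of_connected_induce (hf.connected a)
  exact Nat.card_le_card_of_injective g fun a b hab => hf.eq_of_mem (hg a) (hab ▸ hg b)

theorem IsMinorModel.subset_support (hf : IsMinorModel H G f) (hH : H.support = Set.univ)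
    (a : α) : f a ⊆ G.support := by
  intro u hu
  obtain ⟨b, hab⟩ := H.mem_support.1 (hH ▸ Set.mem_univ a)
  obtain ⟨v, hv, w, _, hvw⟩ := hf.setAdj a b hab
  by_contra hus
  have hclosed := (connected_induce_iff_forall_subset.1 (hf.connected a)).2 {u} ⟨u, hu, rfl⟩
    fun c hc d _ hcd => (hus (hc.2 ▸ hcd.left_mem_support)).elim
  exact hus (hclosed hv ▸ hvw.left_mem_support)

theorem connected_induce_induce_preimage {S T : Set β} (hTS : T ⊆ S)
    (hT : (G.induce T).Connected) :
    ((G.induce S).induce (Subtype.val ⁻¹' T)).Connected := by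
  rw [connected_induce_iff_forall_subset] at hT ⊢
  refine ⟨hT.1.preimage' (by simpa using hTS), fun U hU hclosed a ha => ?_⟩
  obtain ⟨b, hbT, hbU⟩ := hU
  obtain ⟨_, haU⟩ := hT.2 {z | ∃ hz : z ∈ S, ⟨z, hz⟩ ∈ U} ⟨b, hbT, b.2, hbU⟩
    (fun c ⟨hc, hcS, hcU⟩ d hd hcd => ⟨hTS hd, hclosed ⟨c, hcS⟩ ⟨hc, hcU⟩ ⟨d, hTS hd⟩ hd hcd⟩) ha
  exact haU

theorem IsMinor.induce_support (h : IsMinor H G) (hH : H.support = Set.univ) :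
    IsMinor H (G.induce G.support) := by
  obtain ⟨f, hf⟩ := isMinor_iff_exists_isMinorModel.1 h
  have hsub := hf.subset_support hH
  refine IsMinorModel.isMinor (f := fun a => Subtype.val ⁻¹' f a)
    ⟨fun a => connected_induce_induce_preimage (hsub a) (hf.connected a),
      fun a b hab => (hf.disjoint hab).preimage _, fun a b hab => ?_⟩
  obtain ⟨u, hu, v, hv, huv⟩ := hf.setAdj a b hab
  exact ⟨⟨u, hsub a hu⟩, hu, ⟨v, hsub b hv⟩, hv, huv⟩

theorem IsMinor.card_le_ncard_support [Finite β] (h : IsMinor H G) (hH : H.support = Set.univ) :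
    Nat.card α ≤ G.support.ncard :=
  (h.induce_support hH).card_le

theorem IsMinor.of_map {r : β → γ} (h : IsMinor H (G.map r)) (hH : H.support = Set.univ)
    (hr : ∀ u ∈ G.support, (G.induce {v | v ∈ G.support ∧ r v = r u}).Connected) :
    IsMinor H G := by
  refine (h.induce_support hH).trans (IsMinorModel.isMinor
    (f := fun a => {u | u ∈ G.support ∧ r u = a}) ⟨fun a => ?_, fun a b hab => ?_, ?_⟩)
  · obtain ⟨_, b, _, u, v, huv, rfl, _⟩ := a
    exact hr u huv.left_mem_support
  · exact Set.disjoint_left.2 fun u hu hv => hab (Subtype.ext (hu.2.symm.trans hv.2))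
  · rintro ⟨_, _⟩ ⟨_, _⟩ ⟨_, u, v, huv, rfl, rfl⟩
    exact ⟨u, ⟨huv.left_mem_support, rfl⟩, v, ⟨huv.right_mem_support, rfl⟩, huv⟩

end Minor

section KConnected

variable {α β : Type*} {k : ℕ∞} {H : SimpleGraph α}

/-- A graph is `k`-connected if deleting fewer than `k` vertices leaves a (nonempty) connected
graph. In contrast to the usual convention this allows the complete graph on `k` vertices. -/
def IsKConnected (k : ℕ∞) (H : SimpleGraph α) : Prop :=
  ∀ S : Set α, S.encard < k → (H.induce Sᶜ).Connected

theorem IsKConnected.support_eq_univ (hH : IsKConnected k H) (hk : 1 < k) :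
    H.support = Set.univ := by
  refine Set.eq_univ_of_forall fun a => ?_
  by_contra ha
  obtain ⟨b, hba⟩ := nonempty_of_connected_induce (hH {a} (by simpa using hk))
  refine hba ((connected_induce_iff_forall_subset.1 (hH ∅ (by simpa using hk.pos))).2 {a}
    ⟨a, by simp, rfl⟩ (fun c hc d _ hcd => (ha ?_).elim) (by simp))
  exact hc.2 ▸ hcd.left_mem_support

theorem exists_notMem_of_encard_lt {f : β → α} (hf : Function.Injective f) {S : Set α}
    (hS : S.encard < ENat.card β) : ∃ b, f b ∉ S := by
  by_contra! h
  exact hS.not_ge (hf.encard_range.trans (Set.encard_le_encard (Set.range_subset_iff.2 h)))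

theorem isKConnected_top (hk : k ≤ ENat.card α) : IsKConnected k (⊤ : SimpleGraph α) := by
  intro S hS
  obtain ⟨a, ha⟩ := exists_notMem_of_encard_lt Function.injective_id (hS.trans_le hk)
  have : Nonempty (Sᶜ : Set α) := ⟨a, ha⟩
  rw [induce_top]
  exact connected_top

theorem isKConnected_completeBipartiteGraph (hα : k ≤ ENat.card α) (hβ : k ≤ ENat.card β) :
    IsKConnected k (completeBipartiteGraph α β) := by
  intro S hS
  obtain ⟨a, ha⟩ := exists_notMem_of_encard_lt (f := (Sum.inl : α → α ⊕ β)) Sum.inl_injective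
    (hS.trans_le hα)
  obtain ⟨b, hb⟩ := exists_notMem_of_encard_lt (f := (Sum.inr : β → α ⊕ β)) Sum.inr_injective
    (hS.trans_le hβ)
  refine connected_induce_iff_forall_subset.2 ⟨⟨_, ha⟩, fun T ⟨c, hcS, hcT⟩ hT => ?_⟩
  have hadj : ∀ x y, (completeBipartiteGraph α β).Adj (.inl x) (.inr y) := by simp
  have hr : ∀ x, Sum.inl x ∈ Sᶜ ∩ T → ∀ y, Sum.inr y ∈ Sᶜ → Sum.inr y ∈ T :=
    fun x hx y hy => hT _ hx _ hy (hadj x y)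
  have hl : ∀ y, Sum.inr y ∈ Sᶜ ∩ T → ∀ x, Sum.inl x ∈ Sᶜ → Sum.inl x ∈ T :=
    fun y hy x hx => hT _ hy _ hx (hadj x y).symm
  have haT : Sum.inl a ∈ T := by
    rcases c with x | y
    exacts [hl b ⟨hb, hr x ⟨hcS, hcT⟩ b hb⟩ a ha, hl y ⟨hcS, hcT⟩ a ha]
  rintro (x | y) h
  exacts [hl b ⟨hb, hr a ⟨ha, haT⟩ b hb⟩ x h, hr a ⟨ha, haT⟩ y h]

theorem isKConnected_K₅ : IsKConnected 3 K₅ :=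
  isKConnected_top (by rw [ENat.card_eq_coe_fintype_card, Fintype.card_fin]; norm_num)

theorem isKConnected_K₃₃ : IsKConnected 3 K₃₃ :=
  isKConnected_completeBipartiteGraph (by simp) (by simp)

end KConnected

section CliqueSum

variable {α β : Type*} {H : SimpleGraph α} {G₁ G₂ : SimpleGraph β} {f : α → Set β} {K : Set β}

-- A path of `G₂` that leaves and reenters `A` does so in `K`, hence can be cut short inside `K`.
theorem connected_induce_inter_of_isClique {S A : Set β} (hA : G₁.support ⊆ A) (hKA : K ⊆ A)
    (hAK : A ∩ G₂.support ⊆ K) (hK : G₁.IsClique K) (hS : ((G₁ ⊔ G₂).induce S).Connected)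
    (hSA : (S ∩ A).Nonempty) : (G₁.induce (S ∩ A)).Connected := by
  refine connected_induce_iff_forall_subset.2 ⟨hSA, fun T ⟨c, hc, hcT⟩ hT => ?_⟩
  have hST := (connected_induce_iff_forall_subset.1 hS).2
    ((T ∩ A) ∪ {z | z ∉ A ∧ (S ∩ (T ∩ K)).Nonempty}) ⟨c, hc.1, .inl ⟨hcT, hc.2⟩⟩ ?_
  · exact fun z hz => (hST hz.1).elim And.left fun h => (h.1 hz.2).elim
  rintro u ⟨huS, ⟨huT, huA⟩ | ⟨huA, w, hwS, hwT, hwK⟩⟩ v hv (huv | huv)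
  · have hvA := hA huv.right_mem_support
    exact .inl ⟨hT u ⟨⟨huS, huA⟩, huT⟩ v ⟨hv, hvA⟩ huv, hvA⟩
  · have huK := hAK ⟨huA, huv.left_mem_support⟩
    by_cases hvA : v ∈ A
    · exact .inl ⟨hT u ⟨⟨huS, huA⟩, huT⟩ v ⟨hv, hvA⟩
        (hK huK (hAK ⟨hvA, huv.right_mem_support⟩) huv.ne), hvA⟩
    · exact .inr ⟨hvA, u, huS, huT, huK⟩
  · exact (huA (hA huv.left_mem_support)).elim
  · by_cases hvA : v ∈ A
    · have hvK := hAK ⟨hvA, huv.right_mem_support⟩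
      rcases eq_or_ne w v with rfl | hwv
      · exact .inl ⟨hwT, hvA⟩
      · exact .inl ⟨hT w ⟨⟨hwS, hKA hwK⟩, hwT⟩ v ⟨hv, hvA⟩ (hK hwK hvK hwv), hvA⟩
    · exact .inr ⟨hvA, w, hwS, hwT, hwK⟩

theorem IsMinorModel.inter_of_isClique {A : Set β} (hf : IsMinorModel H (G₁ ⊔ G₂) f)
    (hA : G₁.support ⊆ A) (hKA : K ⊆ A) (hAK : A ∩ G₂.support ⊆ K) (hK : G₁.IsClique K)
    (hfA : ∀ a, (f a ∩ K).Nonempty ∨ f a ⊆ A) : IsMinorModel H G₁ fun a => f a ∩ A := by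
  have hclique : ∀ a b, a ≠ b → (f a ∩ K).Nonempty → (f b ∩ K).Nonempty →
      SetAdj G₁ (f a ∩ A) (f b ∩ A) := fun a b hab ⟨u, hu, huK⟩ ⟨v, hv, hvK⟩ =>
    ⟨u, ⟨hu, hKA huK⟩, v, ⟨hv, hKA hvK⟩,
      hK huK hvK fun huv => hab (hf.eq_of_mem hu (huv ▸ hv))⟩
  have hsub : ∀ a b, H.Adj a b → f a ⊆ A → SetAdj G₁ (f a ∩ A) (f b ∩ A) := by
    intro a b hab ha
    obtain ⟨u, hu, v, hv, huv | huv⟩ := hf.setAdj a b hab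
    · exact ⟨u, ⟨hu, ha hu⟩, v, ⟨hv, hA huv.right_mem_support⟩, huv⟩
    · refine hclique a b hab.ne ⟨u, hu, hAK ⟨ha hu, huv.left_mem_support⟩⟩ ?_
      exact (hfA b).elim id fun hb => ⟨v, hv, hAK ⟨hb hv, huv.right_mem_support⟩⟩
  refine ⟨fun a => ?_, fun a b hab => (hf.disjoint hab).mono Set.inter_subset_left
    Set.inter_subset_left, fun a b hab => ?_⟩
  · refine connected_induce_inter_of_isClique hA hKA hAK hK (hf.connected a) ?_
    rcases hfA a with h | h
    · exact h.mono (Set.inter_subset_inter_right _ hKA)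
    · exact (nonempty_of_connected_induce (hf.connected a)).mono (Set.subset_inter subset_rfl h)
  · rcases hfA a with ha | ha
    · rcases hfA b with hb | hb
      · exact hclique a b hab.ne ha hb
      · exact (hsub b a hab.symm hb).symm
    · exact hsub a b hab ha

theorem IsMinorModel.encard_setOf_inter_nonempty_le {G : SimpleGraph β}
    (hf : IsMinorModel H G f) (K : Set β) :
    {a | (f a ∩ K).Nonempty}.encard ≤ K.encard := by
  choose g hg using fun a : {a | (f a ∩ K).Nonempty} => a.2
  exact Function.Embedding.encard_le ⟨fun a => ⟨g a, (hg a).2⟩, fun a b hab =>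
    Subtype.ext (hf.eq_of_mem (hg a).1 (Subtype.mk.inj hab ▸ (hg b).1))⟩

theorem IsKConnected.isMinor_or_isMinor_of_sup {k : ℕ∞} (hH : IsKConnected k H)
    (hK : K.encard < k) (hsupp : G₁.support ∩ G₂.support ⊆ K) (hK₁ : G₁.IsClique K)
    (hK₂ : G₂.IsClique K) (h : IsMinor H (G₁ ⊔ G₂)) : IsMinor H G₁ ∨ IsMinor H G₂ := by
  obtain ⟨f, hf⟩ := isMinor_iff_exists_isMinorModel.1 h
  let S : Set α := {a | (f a ∩ K).Nonempty}
  have hedge : ∀ a ∈ Sᶜ, ∀ u ∈ f a, ∀ v, u ∈ G₁.support → (G₁ ⊔ G₂).Adj u v →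
      v ∈ G₁.support := by
    rintro a ha u hu v hu₁ (huv | huv)
    exacts [huv.right_mem_support, (ha ⟨u, hu, hsupp ⟨hu₁, huv.left_mem_support⟩⟩).elim]
  have hside : ∀ a ∈ Sᶜ, (f a ∩ G₁.support).Nonempty → f a ⊆ G₁.support := fun a ha hne =>
    (connected_induce_iff_forall_subset.1 (hf.connected a)).2 _ hne
      fun u hu v _ huv => hedge a ha u hu.1 v hu.2 huv
  by_cases hS : (Sᶜ ∩ {a | f a ⊆ G₁.support}).Nonempty
  · left
    have hSc := (connected_induce_iff_forall_subset.1
      (hH S ((hf.encard_setOf_inter_nonempty_le K).trans_lt hK))).2 _ hS fun a ha b hb hab => by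
        obtain ⟨u, hu, v, hv, huv⟩ := hf.setAdj a b hab
        exact hside b hb ⟨v, hv, hedge a ha.1 u hu v (ha.2 hu) huv⟩
    refine (hf.inter_of_isClique (A := G₁.support ∪ K) Set.subset_union_left
      Set.subset_union_right ?_ hK₁ fun a => ?_).isMinor
    · exact fun z hz => hz.1.elim (fun h => hsupp ⟨h, hz.2⟩) id
    · exact (em (a ∈ S)).imp id fun ha => (hSc ha).trans Set.subset_union_left
  · right
    rw [sup_comm] at hf
    refine (hf.inter_of_isClique (A := (G₁.support \ K)ᶜ)
      (fun z h₂ h₁ => h₁.2 (hsupp ⟨h₁.1, h₂⟩)) (fun z hz h => h.2 hz) ?_ hK₂ fun a => ?_).isMinor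
    · exact fun z hz => by_contra fun hzK => hz.1 ⟨hz.2, hzK⟩
    · exact (em (a ∈ S)).imp id fun ha z hz h => hS ⟨a, ha, hside a ha ⟨z, hz, h.1⟩⟩

end CliqueSum

section Separation

variable {α V : Type*} {H : SimpleGraph α} {G G₁ G₂ : SimpleGraph V} {K Z : Set V} {x y : V}

/-- The graph `G` is the union of `G₁` and `G₂`, which share only vertices of `K` and both reach
beyond `K`. Membership of a vertex in `G₁` or `G₂` is encoded as membership in the support. -/
structure IsSeparation (G G₁ G₂ : SimpleGraph V) (K : Set V) : Prop where
  sup_eq : G₁ ⊔ G₂ = G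
  support_inter_subset : G₁.support ∩ G₂.support ⊆ K
  nonempty_left : (G₁.support \ K).Nonempty
  nonempty_right : (G₂.support \ K).Nonempty

theorem IsSeparation.symm (h : IsSeparation G G₁ G₂ K) : IsSeparation G G₂ G₁ K :=
  ⟨sup_comm G₂ G₁ ▸ h.sup_eq, Set.inter_comm _ _ ▸ h.support_inter_subset, h.nonempty_right,
    h.nonempty_left⟩

theorem support_sup : (G₁ ⊔ G₂).support = G₁.support ∪ G₂.support := by
  ext v
  simp only [mem_support, sup_adj, Set.mem_union, exists_or]

theorem exists_isSeparation (hZ : ∀ a ∈ Z, ∀ b, G.Adj a b → b ∈ Z ∪ K)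
    (h₁ : ((G.support ∩ Z) \ K).Nonempty) (h₂ : (G.support \ (Z ∪ K)).Nonempty) :
    ∃ G₁ G₂, IsSeparation G G₁ G₂ K := by
  let G₂ : SimpleGraph V :=
    { Adj a b := G.Adj a b ∧ a ∉ Z ∧ b ∉ Z
      symm := ⟨fun a b h => ⟨h.1.symm, h.2.2, h.2.1⟩⟩
      loopless := ⟨fun a h => h.1.ne rfl⟩ }
  have hG₂ : ∀ a ∈ G₂.support, a ∉ Z := fun a ⟨b, hab⟩ => hab.2.1
  refine ⟨G \ G₂, G₂, sdiff_sup_cancel fun a b h => h.1, ?_, ?_, ?_⟩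
  · rintro a ⟨⟨b, hab⟩, ha⟩
    by_contra haK
    refine hab.2 ⟨hab.1, hG₂ a ha, fun hb => ?_⟩
    exact (hZ b hb a hab.1.symm).elim (hG₂ a ha) haK
  · obtain ⟨a, ⟨⟨b, hab⟩, haZ⟩, haK⟩ := h₁
    exact ⟨a, ⟨b, hab, fun h => h.2.1 haZ⟩, haK⟩
  · obtain ⟨a, ⟨b, hab⟩, ha⟩ := h₂
    rw [Set.mem_union, not_or] at ha
    exact ⟨a, ⟨b, hab, ha.1, fun hb => (hZ b hb a hab.symm).elim ha.1 ha.2⟩, ha.2⟩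

theorem mem_support_of_reachable_of_ne (h : G.Reachable x y) (hxy : x ≠ y) : x ∈ G.support := by
  obtain ⟨_ | ⟨hadj, _⟩⟩ := h
  exacts [(hxy rfl).elim, hadj.left_mem_support]

theorem support_sup_edge_of_reachable (h : G.Reachable x y) :
    (G ⊔ edge x y).support = G.support := by
  refine support_sup.trans (Set.union_eq_self_of_subset_right fun v ⟨w, hvw⟩ => ?_)
  rcases (edge_adj ..).1 hvw with ⟨⟨rfl, rfl⟩ | ⟨rfl, rfl⟩, hne⟩
  exacts [mem_support_of_reachable_of_ne h hne, mem_support_of_reachable_of_ne h.symm hne]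

theorem IsSeparation.exists_singleton_of_not_reachable {a : V}
    (h : IsSeparation G G₁ G₂ {x, y}) (ha : a ∈ G₂.support \ {x, y}) (hya : ¬ G₂.Reachable y a) :
    ∃ G₁ G₂, IsSeparation G G₁ G₂ {x} := by
  refine exists_isSeparation (Z := {z | z ∈ G₂.support \ {x, y} ∧ ¬ G₂.Reachable y z}) ?_
    ⟨a, ⟨support_mono (le_sup_right.trans_eq h.sup_eq) ha.1, ha, hya⟩,
      fun hax => ha.2 (.inl hax)⟩ ?_
  · rintro z ⟨hz, hyz⟩ b hzb
    rw [← h.sup_eq] at hzb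
    rcases hzb with hzb | hzb
    · exact (hz.2 (h.support_inter_subset ⟨hzb.left_mem_support, hz.1⟩)).elim
    have hyb : ¬ G₂.Reachable y b := fun hyb => hyz (hyb.trans hzb.symm.reachable)
    by_cases hbx : b = x
    · exact .inr hbx
    · refine .inl ⟨⟨hzb.right_mem_support, ?_⟩, hyb⟩
      rintro (hb | rfl)
      exacts [hbx hb, hyb .rfl]
  · obtain ⟨b, hb, hbK⟩ := h.nonempty_left
    refine ⟨b, support_mono (le_sup_left.trans_eq h.sup_eq) hb, ?_⟩
    rintro (hbZ | hbx)
    exacts [hbK (h.support_inter_subset ⟨hb, hbZ.1.1⟩), hbK (.inl hbx)]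

theorem IsSeparation.reachable_or_exists_singleton (h : IsSeparation G G₁ G₂ {x, y}) :
    G₂.Reachable x y ∨ ∃ G₁ G₂, IsSeparation G G₁ G₂ {x} ∨ IsSeparation G G₁ G₂ {y} := by
  obtain ⟨a, ha⟩ := h.nonempty_right
  by_cases hya : G₂.Reachable y a
  · by_cases hxa : G₂.Reachable x a
    · exact .inl (hxa.trans hya.symm)
    · rw [Set.pair_comm] at h ha
      obtain ⟨_, _, h'⟩ := h.exists_singleton_of_not_reachable ha hxa
      exact .inr ⟨_, _, .inr h'⟩
  · obtain ⟨_, _, h'⟩ := h.exists_singleton_of_not_reachable ha hya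
    exact .inr ⟨_, _, .inl h'⟩

theorem IsSeparation.exists_reachable (h : IsSeparation G G₁ G₂ {x, y}) :
    ∃ G₁ G₂ x y, IsSeparation G G₁ G₂ {x, y} ∧ G₁.Reachable x y ∧ G₂.Reachable x y := by
  by_cases hone : ∃ G₁ G₂ z, IsSeparation G G₁ G₂ {z}
  · obtain ⟨G₁, G₂, z, hz⟩ := hone
    exact ⟨G₁, G₂, z, z, by rwa [Set.pair_eq_singleton], .rfl, .rfl⟩
  have hreach : ∀ {G₁ G₂}, IsSeparation G G₁ G₂ {x, y} → G₂.Reachable x y := fun h =>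
    h.reachable_or_exists_singleton.resolve_right fun ⟨_, _, h'⟩ =>
      hone (h'.elim (fun h' => ⟨_, _, _, h'⟩) fun h' => ⟨_, _, _, h'⟩)
  exact ⟨G₁, G₂, x, y, h, hreach h.symm, hreach h⟩

theorem IsMinor.of_map_of_connected {W : Type*} {Q : Set V} {r : V → W}
    (h : IsMinor H (G.map r)) (hH : H.support = Set.univ) (hQ : (G.induce Q).Connected)
    (hQG : Q ⊆ G.support)
    (hr : ∀ u ∈ G.support, ∀ v ∈ G.support, r v = r u ↔ v = u ∨ v ∈ Q ∧ u ∈ Q) :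
    IsMinor H G := by
  refine h.of_map hH fun u hu => ?_
  by_cases huQ : u ∈ Q
  · suffices hfib : {v | v ∈ G.support ∧ r v = r u} = Q by rwa [hfib]
    ext v
    refine ⟨fun hv => ((hr u hu v hv.1).1 hv.2).elim (fun h => h ▸ huQ) And.left, fun hv => ?_⟩
    exact ⟨hQG hv, (hr u hu v (hQG hv)).2 (.inr ⟨hv, huQ⟩)⟩
  · suffices hfib : {v | v ∈ G.support ∧ r v = r u} = {u} by
      rw [hfib, induce_singleton_eq_top]
      exact connected_top
    ext v
    refine ⟨fun hv => ?_, by rintro rfl; exact ⟨hu, rfl⟩⟩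
    exact ((hr u hu v hv.1).1 hv.2).resolve_right fun h => huQ h.2

theorem IsMinor.of_sup_edge (h : IsMinor H (G₁ ⊔ edge x y)) (hH : H.support = Set.univ)
    (hsupp : G₁.support ∩ G₂.support ⊆ {x, y}) (hxy : G₂.Reachable x y) :
    IsMinor H (G₁ ⊔ G₂) := by
  classical
  obtain ⟨p, hp⟩ := hxy.exists_isPath
  rcases p with _ | @⟨_, w, _, hxw, q⟩
  · exact ((sup_edge_self (G := G₁) (s := x)) ▸ h).mono le_sup_left
  obtain ⟨hq, hxq⟩ := (Walk.cons_isPath_iff _ _).1 hp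
  have hyq : y ∈ q.support := q.end_mem_support
  have hne : x ≠ y := fun h => hxq (h ▸ hyq)
  have hq₂ : ∀ z ∈ q.support, z ∈ G₂.support := fun z hz => by
    rcases eq_or_ne z y with rfl | hzy
    · exact mem_support_of_reachable_of_ne hxy.symm hne.symm
    · exact mem_support_of_reachable_of_ne (q.dropUntil z hz).reachable hzy
  let r : V → V := fun z => if z ∈ q.support then y else z
  have hrq : ∀ z ∈ q.support, r z = y := fun z hz => if_pos hz
  have hr : ∀ z ∉ q.support, r z = z := fun z hz => if_neg hz
  have hr₁ : ∀ z ∈ G₁.support, r z = z := fun z hz₁ => ite_eq_right_iff.2 fun hz =>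
    ((hsupp ⟨hz₁, hq₂ z hz⟩).resolve_left fun h => hxq (h ▸ hz)).symm
  refine IsMinor.of_map_of_connected (Q := {z | z ∈ q.support}) (r := r) (h.mono ?_) hH
    (q.connected_induce_support.mono fun _ _ => .inr)
    (fun z hz => support_mono le_sup_right (hq₂ z hz)) fun u _ v _ => ?_
  · have hxy' : ((G₁ ⊔ G₂).map r).Adj x y :=
      ⟨hne, x, w, .inr hxw, hr x hxq, hrq w q.start_mem_support⟩
    rintro a b (hab | hab)
    · exact ⟨hab.ne, a, b, .inl hab, hr₁ a hab.left_mem_support, hr₁ b hab.right_mem_support⟩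
    · rcases (edge_adj ..).1 hab with ⟨⟨rfl, rfl⟩ | ⟨rfl, rfl⟩, -⟩
      exacts [hxy', hxy'.symm]
  · simp only [Set.mem_ofPred_eq, r]
    split_ifs <;> grind

end Separation

section Center

variable {V κ : Type*} {G : SimpleGraph V}

theorem nontrivial_of_three_lt_encard {X Y Z : Set κ} (h : 3 < (X ∪ Y ∪ Z).encard)
    (hX : X.Subsingleton) (hY : Y.Subsingleton) : Z.Nontrivial := by
  rw [← Set.not_subsingleton_iff]
  intro hZ
  rw [← Set.encard_le_one_iff_subsingleton] at hX hY hZ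
  refine h.not_ge ((Set.encard_union_le _ _).trans ?_)
  calc (X ∪ Y).encard + Z.encard ≤ X.encard + Y.encard + Z.encard := by
        gcongr; exact Set.encard_union_le _ _
    _ ≤ 1 + 1 + 1 := by gcongr
    _ = 3 := by norm_num

variable {B : Set V} {n : V → Set κ}

/-- A connected, or empty, part `X` of `B` with connected complement, whose vertices carry at most
one label altogether. Centers are found next to maximal such parts. -/
structure IsMonochromaticPart (G : SimpleGraph V) (B : Set V) (n : V → Set κ) (X : Set V) :
    Prop where
  subset : X ⊆ B
  connected : X.Nonempty → (G.induce X).Connected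
  connected_sdiff : (G.induce (B \ X)).Connected
  subsingleton : (⋃ v ∈ X, n v).Subsingleton

theorem subsingleton_of_maximal_isMonochromaticPart {X D : Set V} {w : V}
    (hX : Maximal (IsMonochromaticPart G B n) X)
    (hsplit : ∀ Y ⊆ B, (G.induce Y).Connected → (G.induce (B \ Y)).Connected →
      (⋃ v ∈ Y, n v).Subsingleton ∨ (⋃ v ∈ B \ Y, n v).Subsingleton)
    (hw : w ∈ B \ X) (hXw : X.Nonempty → SetAdj G X {w}) (hDB : D ⊆ (B \ X) \ {w})
    (hD : (G.induce D).Connected) (hBD : (G.induce ((B \ X) \ D)).Connected) :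
    (⋃ v ∈ D, n v).Subsingleton := by
  have hDB' : D ⊆ B := fun z hz => (hDB hz).1.1
  have hwD : w ∈ (B \ X) \ D := ⟨hw, fun h => (hDB h).2 rfl⟩
  have hsub : X ∪ (B \ X) \ D = B \ D := by
    ext z
    have := @hDB z
    have := @hX.prop.subset z
    simp only [Set.mem_union, Set.mem_sdiff] at *
    tauto
  have hBD' : (G.induce (B \ D)).Connected := by
    rcases X.eq_empty_or_nonempty with rfl | hne
    · rwa [Set.sdiff_empty] at hBD
    · rw [← hsub]
      exact connected_induce_union_of_setAdj (hX.prop.connected hne) hBD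
        ((hXw hne).mono subset_rfl (Set.singleton_subset_iff.2 hwD))
  refine (hsplit D hDB' hD hBD').resolve_right fun h => hw.2 ?_
  refine hX.le_of_ge (y := B \ D) ⟨Set.sdiff_subset, fun _ => hBD', ?_, h⟩
    (hsub ▸ Set.subset_union_left) ⟨hw.1, hwD.2⟩
  rwa [Set.sdiff_sdiff_cancel_left hDB']

theorem not_setAdj_of_maximal_isMonochromaticPart [Finite V] {X : Set V} {w : V}
    (hX : Maximal (IsMonochromaticPart G B n) X) (hn : 3 < (⋃ v ∈ B, n v).encard)
    (hsplit : ∀ Y ⊆ B, (G.induce Y).Connected → (G.induce (B \ Y)).Connected →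
      (⋃ v ∈ Y, n v).Subsingleton ∨ (⋃ v ∈ B \ Y, n v).Subsingleton)
    (hw : w ∈ B \ X) (hXw : X.Nonempty → SetAdj G X {w}) :
    ¬ SetAdj G X ((B \ X) \ {w}) := by
  rintro ⟨x, hx, d, hd, hxd⟩
  obtain ⟨D, hdD, hDB, hD, hBD⟩ := exists_connected_induce_superset_sdiff
    hX.prop.connected_sdiff hw (C := {d}) (by simp) (by simpa using hd)
  have hDn := subsingleton_of_maximal_isMonochromaticPart hX hsplit hw hXw hDB hD hBD
  have hXD : (G.induce (X ∪ D)).Connected :=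
    connected_induce_union_of_setAdj (hX.prop.connected ⟨x, hx⟩) hD ⟨x, hx, d, hdD rfl, hxd⟩
  have hXDB : X ∪ D ⊆ B := Set.union_subset hX.prop.subset fun z hz => (hDB hz).1.1
  rw [Set.sdiff_sdiff] at hBD
  refine (hsplit _ hXDB hXD hBD).elim (fun h => hd.1.2 ?_) fun h => ?_
  · exact hX.le_of_ge ⟨hXDB, fun _ => hXD, hBD, h⟩ Set.subset_union_left (.inr (hdD rfl))
  · refine (nontrivial_of_three_lt_encard ?_ hX.prop.subsingleton hDn).not_subsingleton h
    rwa [← Set.biUnion_union, ← Set.biUnion_union, Set.union_sdiff_cancel hXDB]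

theorem exists_forall_connected_subsingleton [Finite V] (hB : (G.induce B).Connected)
    (hn : 3 < (⋃ v ∈ B, n v).encard)
    (hsplit : ∀ Y ⊆ B, (G.induce Y).Connected → (G.induce (B \ Y)).Connected →
      (⋃ v ∈ Y, n v).Subsingleton ∨ (⋃ v ∈ B \ Y, n v).Subsingleton) :
    ∃ w ∈ B, ∀ C ⊆ B \ {w}, (G.induce C).Connected → (⋃ v ∈ C, n v).Subsingleton := by
  obtain ⟨X, -, hX⟩ := (Set.toFinite {X | IsMonochromaticPart G B n X}).exists_le_maximal
    (a := ∅) ⟨Set.empty_subset B, fun h => (Set.not_nonempty_empty h).elim,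
      by rwa [Set.sdiff_empty], by simp⟩
  obtain ⟨w, hw, hXw⟩ : ∃ w ∈ B \ X, X.Nonempty → SetAdj G X {w} := by
    have hBX := nonempty_of_connected_induce hX.prop.connected_sdiff
    rcases X.eq_empty_or_nonempty with rfl | hne
    · exact hBX.imp fun w hw => ⟨hw, fun h => (Set.not_nonempty_empty h).elim⟩
    · obtain ⟨u, hu, w, hw, huw⟩ := setAdj_sdiff_of_connected hB hX.prop.subset hne hBX
      exact ⟨w, hw, fun _ => ⟨u, hu, w, rfl, huw⟩⟩
  refine ⟨w, hw.1, fun C hCB hC => ?_⟩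
  by_cases hCX : (C ∩ X).Nonempty
  · refine hX.prop.subsingleton.anti (Set.biUnion_subset_biUnion_left ?_)
    refine (connected_induce_iff_forall_subset.1 hC).2 X hCX fun u hu v hv huv => by_contra fun h =>
      not_setAdj_of_maximal_isMonochromaticPart hX hn hsplit hw hXw ?_
    exact ⟨u, hu.2, v, ⟨⟨(hCB hv).1, h⟩, (hCB hv).2⟩, huv⟩
  · obtain ⟨D, hCD, hDB, hD, hBD⟩ :=
      exists_connected_induce_superset_sdiff hX.prop.connected_sdiff hw hC
        fun z hz => ⟨⟨(hCB hz).1, fun hzX => hCX ⟨z, hz, hzX⟩⟩, (hCB hz).2⟩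
    exact (subsingleton_of_maximal_isMonochromaticPart hX hsplit hw hXw hDB hD hBD).anti
      (Set.biUnion_subset_biUnion_left hCD)

end Center

section CompleteMinor

variable {α V κ : Type*} {H : SimpleGraph α} {G : SimpleGraph V} {f : α → Set V}

theorem exists_nodup_of_three_lt_encard_union {P Q : Set κ} (hP : P.Nontrivial)
    (hQ : Q.Nontrivial) (h : 3 < (P ∪ Q).encard) :
    ∃ a ∈ P, ∃ b ∈ P, ∃ c ∈ Q, ∃ d ∈ Q, [a, b, c, d].Nodup := by
  suffices ∃ P' ⊆ P, P'.Nontrivial ∧ (Q \ P').Nontrivial by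
    obtain ⟨P', hP', ⟨a, ha, b, hb, hab⟩, c, hc, d, hd, hcd⟩ := this
    refine ⟨a, hP' ha, b, hP' hb, c, hc.1, d, hd.1, ?_⟩
    have hne : ∀ {u v}, u ∈ P' → v ∈ Q \ P' → u ≠ v := fun hu hv huv => hv.2 (huv ▸ hu)
    simp [hab, hcd, hne ha hc, hne ha hd, hne hb hc, hne hb hd]
  by_cases hPQ : (P \ Q).Nontrivial
  · exact ⟨P \ Q, Set.sdiff_subset, hPQ, hQ.mono fun z hz => ⟨hz, fun h => h.2 hz⟩⟩
  have hPQ' : (P \ Q).encard ≤ 2 :=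
    (Set.encard_le_one_iff_subsingleton.2 (Set.not_nontrivial_iff.1 hPQ)).trans one_le_two
  obtain ⟨P', hPQP', hP'P, hP'⟩ := Set.exists_superset_subset_encard_eq Set.sdiff_subset hPQ'
    (Order.add_one_le_of_lt (Set.one_lt_encard_iff_nontrivial.2 hP))
  refine ⟨P', hP'P, Set.one_lt_encard_iff_nontrivial.1 (hP' ▸ Nat.one_lt_ofNat), ?_⟩
  rw [← Set.not_subsingleton_iff, ← Set.encard_le_one_iff_subsingleton]
  intro hQP'
  refine h.not_ge ?_
  calc (P ∪ Q).encard ≤ (P' ∪ Q \ P').encard := Set.encard_le_encard fun z hz => by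
        by_cases hzP' : z ∈ P'
        · exact .inl hzP'
        · exact .inr ⟨hz.elim (fun hzP => by_contra fun hzQ => hzP' (hPQP' ⟨hzP, hzQ⟩)) id, hzP'⟩
    _ ≤ 2 + 1 := (Set.encard_union_le _ _).trans (by gcongr; exact hP'.le)
    _ = 3 := by norm_num

/-- The indices, other than `i`, of the branch sets of `f` that are adjacent to `X`. -/
def branchLabels (G : SimpleGraph V) (f : α → Set V) (i : α) (X : Set V) : Set α :=
  {j | j ≠ i ∧ SetAdj G X (f j)}

theorem biUnion_branchLabels_singleton (i : α) (X : Set V) :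
    ⋃ v ∈ X, branchLabels G f i {v} = branchLabels G f i X := by
  ext j
  simp only [branchLabels, SetAdj, Set.mem_iUnion, Set.mem_ofPred_eq, Set.mem_singleton_iff]
  grind

theorem branchLabels_union (i : α) (X Y : Set V) :
    branchLabels G f i (X ∪ Y) = branchLabels G f i X ∪ branchLabels G f i Y := by
  ext j
  simp only [branchLabels, setAdj_union_left, Set.mem_union, Set.mem_ofPred_eq, and_or_left]

theorem IsMinorModel.three_lt_encard_branchLabels {f : Fin 5 → Set V} (hf : IsMinorModel K₅ G f)
    (i : Fin 5) : 3 < (branchLabels G f i (f i)).encard := by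
  have hi : branchLabels G f i (f i) = {i}ᶜ := by
    ext j
    exact ⟨And.left, fun hji => ⟨hji, hf.setAdj i j (Ne.symm hji)⟩⟩
  have hcard : ({i}ᶜ : Set (Fin 5)).ncard = 4 := by
    rw [Set.ncard_compl, Set.ncard_singleton, Nat.card_fin]
  rw [hi, ← Set.Finite.cast_ncard_eq (Set.toFinite _), hcard]
  norm_num

open Classical in
/-- The family of branch sets obtained from `f` by splitting `f i` into `X`, indexed by `none`,
and `f i \ X`, indexed by `some i`. -/
noncomputable def splitBranch (f : α → Set V) (i : α) (X : Set V) : Option α → Set V :=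
  fun o => o.elim X (Function.update f i (f i \ X))

theorem splitBranch_some_self (i : α) (X : Set V) : splitBranch f i X (some i) = f i \ X := by
  simp [splitBranch]

theorem splitBranch_some_of_ne {i j : α} (hj : j ≠ i) (X : Set V) :
    splitBranch f i X (some j) = f j := by
  simp [splitBranch, hj]

theorem IsMinorModel.connected_splitBranch (hf : IsMinorModel H G f) {i : α} {X : Set V}
    (hX : (G.induce X).Connected) (hY : (G.induce (f i \ X)).Connected) (o : Option α) :
    (G.induce (splitBranch f i X o)).Connected := by
  rcases o with _ | j
  · exact hX
  rcases eq_or_ne j i with rfl | hj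
  exacts [splitBranch_some_self j X ▸ hY, splitBranch_some_of_ne hj X ▸ hf.connected j]

theorem IsMinorModel.pairwise_disjoint_splitBranch (hf : IsMinorModel H G f) {i : α} {X : Set V}
    (hXi : X ⊆ f i) :
    Pairwise fun o o' => Disjoint (splitBranch f i X o) (splitBranch f i X o') := by
  have hle : ∀ j, splitBranch f i X (some j) ⊆ f j := fun j => by
    rcases eq_or_ne j i with rfl | hj
    exacts [splitBranch_some_self j X ▸ Set.sdiff_subset, (splitBranch_some_of_ne hj X).le]
  have hnone : ∀ j, Disjoint X (splitBranch f i X (some j)) := fun j => by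
    rcases eq_or_ne j i with rfl | hj
    exacts [splitBranch_some_self j X ▸ Set.disjoint_sdiff_right,
      (hf.disjoint hj.symm).mono hXi (hle j)]
  rintro (_ | j) (_ | k) hjk
  exacts [(hjk rfl).elim, hnone k, (hnone j).symm,
    (hf.disjoint fun h => hjk (congrArg some h)).mono (hle j) (hle k)]

theorem IsMinorModel.isMinor_K₃₃_of_split {f : Fin 5 → Set V} (hf : IsMinorModel K₅ G f)
    {i : Fin 5} {X : Set V} (hXi : X ⊆ f i) (hX : (G.induce X).Connected)
    (hY : (G.induce (f i \ X)).Connected) (hP : (branchLabels G f i X).Nontrivial)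
    (hQ : (branchLabels G f i (f i \ X)).Nontrivial) : IsMinor K₃₃ G := by
  have hcard := hf.three_lt_encard_branchLabels i
  rw [← Set.union_sdiff_cancel hXi, branchLabels_union] at hcard
  obtain ⟨a, ⟨hai, ha⟩, b, ⟨hbi, hb⟩, c, ⟨hci, hc⟩, d, ⟨hdi, hd⟩, hnodup⟩ :=
    exists_nodup_of_three_lt_encard_union hP hQ hcard
  simp only [List.nodup_cons, List.mem_cons, List.not_mem_nil, or_false, not_or] at hnodup
  obtain ⟨⟨hab, hac, had⟩, ⟨hbc, hbd⟩, hcd, -⟩ := hnodup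
  have hXY : SetAdj G X (f i \ X) := setAdj_sdiff_of_connected (hf.connected i) hXi
    (nonempty_of_connected_induce hX) (nonempty_of_connected_induce hY)
  let e : Fin 3 ⊕ Fin 3 → Option (Fin 5) :=
    Sum.elim ![none, some c, some d] ![some i, some a, some b]
  have he : Function.Injective e := by
    rintro (l | l) (r | r) <;> fin_cases l <;> fin_cases r <;> simp [e] <;> grind
  have hadj : ∀ l r,
      SetAdj G (splitBranch f i X (e (.inl l))) (splitBranch f i X (e (.inr r))) := by
    have hnone : splitBranch f i X none = X := rfl
    have hf' : ∀ {j k}, j ≠ k → SetAdj G (f k) (f j) := fun h => hf.setAdj _ _ h.symm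
    simp [Fin.forall_fin_succ, e, hnone, splitBranch_some_self, splitBranch_some_of_ne, hai, hbi,
      hci, hdi, ha, hb, hc.symm, hd.symm, hXY, hf' hac, hf' had, hf' hbc, hf' hbd]
  refine IsMinorModel.isMinor (f := splitBranch f i X ∘ e)
    ⟨fun o => hf.connected_splitBranch hX hY _,
      fun o o' ho => hf.pairwise_disjoint_splitBranch hXi (he.ne ho), ?_⟩
  rintro (l | l) (r | r) hlr
  · simp at hlr
  · exact hadj l r
  · exact (hadj r l).symm
  · simp at hlr

theorem IsMinorModel.update_insert [DecidableEq α] (hf : IsMinorModel H G f) {i : α} {v : V}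
    (hv : ∀ j, v ∉ f j) (hadj : SetAdj G {v} (f i)) :
    IsMinorModel H G (Function.update f i (insert v (f i))) := by
  have hsub : ∀ j, f j ⊆ Function.update f i (insert v (f i)) j := fun j => by
    rcases eq_or_ne j i with rfl | hji
    · simp
    · simp [hji]
  refine ⟨fun j => ?_, fun j k hjk => ?_, fun j k hjk =>
    (hf.setAdj j k hjk).mono (hsub j) (hsub k)⟩
  · rcases eq_or_ne j i with rfl | hji
    · rw [Function.update_self]
      exact connected_induce_insert (hf.connected j) hadj
    · rw [Function.update_of_ne hji]
      exact hf.connected j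
  · rcases eq_or_ne j i with rfl | hji
    · simpa [hjk.symm, hv] using hf.disjoint hjk
    · rcases eq_or_ne k i with rfl | hki
      · simpa [hjk, hv] using hf.disjoint hjk
      · simpa [hji, hki] using hf.disjoint hjk

theorem IsMinor.exists_isMinorModel_closed [Finite α] [Finite V] (h : IsMinor H G) :
    ∃ f, IsMinorModel H G f ∧ ∀ i, ∀ u ∈ f i, ∀ v, G.Adj u v → ∃ j, v ∈ f j := by
  classical
  obtain ⟨f, hf⟩ := isMinor_iff_exists_isMinorModel.1 h
  obtain ⟨g, -, hg⟩ := (Set.toFinite {f | IsMinorModel H G f}).exists_le_maximal hf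
  refine ⟨g, hg.prop, fun i u hu v huv => by_contra fun hv => hv ⟨i, ?_⟩⟩
  rw [not_exists] at hv
  have hle := hg.le_of_ge (hg.prop.update_insert hv ⟨v, rfl, u, hu, huv.symm⟩)
    (le_update_iff.2 ⟨Set.subset_insert v _, fun _ _ => le_rfl⟩) i
  exact hle (by simp)

/-- A vertex `w` of the branch set `f i` without which every connected part of `f i` sees at most
one other branch set. -/
structure IsBranchCenter (G : SimpleGraph V) (f : α → Set V) (i : α) (w : V) : Prop where
  mem : w ∈ f i
  subsingleton : ∀ C ⊆ f i \ {w}, (G.induce C).Connected → (branchLabels G f i C).Subsingleton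

theorem IsMinorModel.exists_isBranchCenter [Finite V] {f : Fin 5 → Set V}
    (hf : IsMinorModel K₅ G f) (hG : ¬ IsMinor K₃₃ G) (i : Fin 5) :
    ∃ w, IsBranchCenter G f i w := by
  obtain ⟨w, hw, hwC⟩ := exists_forall_connected_subsingleton (n := fun v => branchLabels G f i {v})
    (hf.connected i)
    (by rw [biUnion_branchLabels_singleton]; exact hf.three_lt_encard_branchLabels i) (by
      simp only [biUnion_branchLabels_singleton, ← Set.not_nontrivial_iff, ← not_and_or]
      exact fun Y hYi hY hiY h => hG (hf.isMinor_K₃₃_of_split hYi hY hiY h.1 h.2))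
  simp only [biUnion_branchLabels_singleton] at hwC
  exact ⟨w, hw, hwC⟩

/-- The vertices of `f i`, other than the center `w i`, whose component in `f i \ {w i}` sees no
branch set apart from `f i` and `f j`. -/
def lobe (G : SimpleGraph V) (f : α → Set V) (w : α → V) (i j : α) : Set V :=
  {z | z ∈ f i \ {w i} ∧ ∀ C ⊆ f i \ {w i}, (G.induce C).Connected → z ∈ C →
    branchLabels G f i C ⊆ {j}}

variable {w : α → V} {i j k : α}

theorem lobe_subset : lobe G f w i j ⊆ f i \ {w i} := fun _ hz => hz.1

theorem IsBranchCenter.exists_mem_lobe [Nontrivial α] (hw : IsBranchCenter G f i (w i)) {z : V}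
    (hz : z ∈ f i \ {w i}) : ∃ j ≠ i, z ∈ lobe G f w i j := by
  by_cases h : ∃ C ⊆ f i \ {w i}, (G.induce C).Connected ∧ z ∈ C ∧ (branchLabels G f i C).Nonempty
  · obtain ⟨C, hCi, hC, hzC, j, hj⟩ := h
    refine ⟨j, hj.1, hz, fun C' hCi' hC' hzC' k hk => ?_⟩
    have hunion : (G.induce (C ∪ C')).Connected :=
      induce_union_connected hC.preconnected hC'.preconnected ⟨z, hzC, hzC'⟩
    have hsub := hw.subsingleton _ (Set.union_subset hCi hCi') hunion
    rw [branchLabels_union] at hsub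
    exact hsub (.inr hk) (.inl hj)
  · obtain ⟨j, hj⟩ := exists_ne i
    exact ⟨j, hj, hz, fun C hCi hC hzC k hk => (h ⟨C, hCi, hC, hzC, k, hk⟩).elim⟩

theorem mem_lobe_of_adj {a b : V} (ha : a ∈ lobe G f w i j) (hb : b ∈ f i \ {w i})
    (hab : G.Adj a b) : b ∈ lobe G f w i j := by
  refine ⟨hb, fun C hCi hC hbC => ?_⟩
  have hinsert := ha.2 (insert a C) (Set.insert_subset ha.1 hCi)
    (connected_induce_insert hC ⟨a, rfl, b, hbC, hab⟩) (Set.mem_insert a C)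
  rw [Set.insert_eq, branchLabels_union] at hinsert
  exact Set.subset_union_right.trans hinsert

theorem IsBranchCenter.mem_lobe_of_adj (hw : IsBranchCenter G f j (w j)) {a b : V}
    (hij : i ≠ j) (ha : a ∈ f i) (hb : b ∈ f j \ {w j}) (hab : G.Adj a b) :
    b ∈ lobe G f w j i :=
  ⟨hb, fun C hCj hC hbC _ hk => hw.subsingleton C hCj hC hk ⟨hij, b, hbC, a, ha, hab.symm⟩⟩

theorem eq_of_mem_lobe_of_adj {a b : V} (ha : a ∈ lobe G f w i j) (hb : b ∈ f k) (hki : k ≠ i)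
    (hab : G.Adj a b) : k = j :=
  ha.2 {a} (Set.singleton_subset_iff.2 ha.1) (by simp) rfl ⟨hki, a, rfl, b, hb, hab⟩

theorem mem_lobe_union_of_adj (hw : ∀ i, IsBranchCenter G f i (w i)) {a b : V}
    (ha : a ∈ lobe G f w i j) (hb : b ∈ f k) (hab : G.Adj a b) :
    b ∈ (lobe G f w i j ∪ lobe G f w j i) ∪ {w i, w j} := by
  rcases eq_or_ne k i with rfl | hki
  · by_cases hbw : b = w k
    · exact .inr (.inl hbw)
    · exact .inl (.inl (mem_lobe_of_adj ha ⟨hb, hbw⟩ hab))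
  · obtain rfl := eq_of_mem_lobe_of_adj ha hb hki hab
    by_cases hbw : b = w k
    · exact .inr (.inr hbw)
    · exact .inl (.inr ((hw k).mem_lobe_of_adj hki.symm (lobe_subset ha).1 ⟨hb, hbw⟩ hab))

theorem IsMinorModel.exists_isSeparation_of_mem_sdiff {f : Fin 5 → Set V} {w : Fin 5 → V}
    {i : Fin 5} {z : V} (hf : IsMinorModel K₅ G f)
    (hclosed : ∀ i, ∀ u ∈ f i, ∀ v, G.Adj u v → ∃ j, v ∈ f j)
    (hw : ∀ i, IsBranchCenter G f i (w i)) (hz : z ∈ f i \ {w i}) :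
    ∃ G₁ G₂ x y, IsSeparation G G₁ G₂ {x, y} := by
  have hsupp := hf.subset_support (isKConnected_K₅.support_eq_univ Nat.one_lt_ofNat)
  obtain ⟨j, hji, hzj⟩ := (hw i).exists_mem_lobe hz
  obtain ⟨k, hki, hkj⟩ : ∃ k, k ≠ i ∧ k ≠ j :=
    (by decide : ∀ i j : Fin 5, ∃ k, k ≠ i ∧ k ≠ j) i j
  have hwne : ∀ {l m} {v : V}, l ≠ m → v ∈ f m → w l ≠ v := fun hlm hv h =>
    hlm (hf.eq_of_mem (hw _).mem (h ▸ hv))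
  have hZ : ∀ a ∈ lobe G f w i j ∪ lobe G f w j i, ∀ b, G.Adj a b →
      b ∈ (lobe G f w i j ∪ lobe G f w j i) ∪ {w i, w j} := by
    rintro a (ha | ha) b hab
    all_goals obtain ⟨l, hb⟩ := hclosed _ a (lobe_subset ha).1 b hab
    · exact mem_lobe_union_of_adj hw ha hb hab
    · rw [Set.union_comm (lobe G f w i j), Set.pair_comm]
      exact mem_lobe_union_of_adj hw ha hb hab
  have hk : w k ∉ (lobe G f w i j ∪ lobe G f w j i) ∪ {w i, w j} := by
    rintro ((h | h) | h | h)
    exacts [hwne hki (lobe_subset h).1 rfl, hwne hkj (lobe_subset h).1 rfl,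
      hwne hki (hw i).mem h, hwne hkj (hw j).mem h]
  obtain ⟨G₁, G₂, h⟩ := exists_isSeparation hZ
    ⟨z, ⟨hsupp i hz.1, .inl hzj⟩, by simp [show z ≠ w i from hz.2, (hwne hji hz.1).symm]⟩
    ⟨w k, hsupp k (hw k).mem, hk⟩
  exact ⟨G₁, G₂, w i, w j, h⟩

theorem ncard_support_eq_five_or_exists_isSeparation [Finite V]
    (hG : ¬ IsMinor K₃₃ G) (h : IsMinor K₅ G) :
    G.support.ncard = 5 ∨ ∃ G₁ G₂ x y, IsSeparation G G₁ G₂ {x, y} := by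
  obtain ⟨f, hf, hclosed⟩ := h.exists_isMinorModel_closed
  choose w hw using hf.exists_isBranchCenter hG
  have hsupp := hf.subset_support (isKConnected_K₅.support_eq_univ Nat.one_lt_ofNat)
  have hwinj : Function.Injective w := fun i j hij =>
    hf.eq_of_mem (hw i).mem (hij ▸ (hw j).mem)
  by_cases hcover : ∃ u ∈ G.support, ∀ i, u ∉ f i
  · obtain ⟨u, hu, huf⟩ := hcover
    have huw : ∀ i, u ≠ w i := fun i hui => huf i (hui ▸ (hw i).mem)
    have hZ : ∀ a ∈ ⋃ i, f i, ∀ b, G.Adj a b → b ∈ (⋃ i, f i) ∪ {w 0, w 0} := fun a ha b hab =>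
      let ⟨i, hi⟩ := Set.mem_iUnion.1 ha
      .inl (Set.mem_iUnion.2 (hclosed i a hi b hab))
    obtain ⟨G₁, G₂, hsep⟩ := exists_isSeparation hZ
      ⟨w 1, ⟨hsupp 1 (hw 1).mem, Set.mem_iUnion_of_mem 1 (hw 1).mem⟩, by simp [hwinj.eq_iff]⟩
      ⟨u, hu, by simp [huf, huw]⟩
    exact .inr ⟨G₁, G₂, w 0, w 0, hsep⟩
  · by_cases hrange : G.support = Set.range w
    · left
      rw [hrange, ← Nat.card_coe_set_eq, Nat.card_range_of_injective hwinj, Nat.card_fin]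
    · obtain ⟨z, hz, hzw⟩ := Set.not_subset.1 fun h => hrange (h.antisymm
        (Set.range_subset_iff.2 fun i => hsupp i (hw i).mem))
      push Not at hcover
      obtain ⟨i, hi⟩ := hcover z hz
      exact .inr (hf.exists_isSeparation_of_mem_sdiff hclosed hw
        ⟨hi, fun hzi => hzw ⟨i, hzi.symm⟩⟩)

end CompleteMinor

section Folding

variable {V W : Type*} {G G' G₁ G₂ : SimpleGraph V} {K L : Set V} {r r₁ r₂ : V → V} {u v : V}

theorem Planar.of_injective_hom {H : SimpleGraph W} (hG : Planar G) (φ : H →g G)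
    (hφ : Function.Injective φ) : Planar H :=
  ⟨fun h => hG.1 (h.trans (isMinor_of_injective_hom φ hφ)),
    fun h => hG.2 (h.trans (isMinor_of_injective_hom φ hφ))⟩

theorem graph_map_sup (f : V → W) : (G₁ ⊔ G₂).map f = G₁.map f ⊔ G₂.map f := by
  ext a b
  simp only [sup_adj, map_adj', or_and_right, exists_or, and_or_left]

theorem map_congr_of_eqOn_support {f g : V → W} (h : Set.EqOn f g G.support) :
    G.map f = G.map g := by
  ext a b
  simp only [map_adj']
  refine and_congr_right fun _ => exists₂_congr fun u v => and_congr_right fun huv => ?_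
  rw [h huv.left_mem_support, h huv.right_mem_support]

theorem support_map_subset_image (f : V → W) : (G.map f).support ⊆ f '' G.support := by
  rintro _ ⟨_, _, u, v, huv, rfl, -⟩
  exact ⟨u, huv.left_mem_support, rfl⟩

theorem isClique_map (f : V → W) (hK : G.IsClique K) : (G.map f).IsClique (f '' K) := by
  rintro _ ⟨u, hu, rfl⟩ _ ⟨v, hv, rfl⟩ huv
  exact map_adj_apply' (hK hu hv fun h => huv (congrArg f h)) huv

/-- The fibers of `r` have at most two elements, and identifying the vertices within each fiber
makes `G` planar. At most `(n - 2) / 3` vertices are moved by `r`, where `n` is the number of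
non-isolated vertices of `G`; this bounds the number of fibers with two elements. The moved
vertices and their images lie outside `K`. -/
structure IsPlanarFolding (G : SimpleGraph V) (K : Set V) (r : V → V) : Prop where
  injOn : Set.InjOn r {v | r v ≠ v}
  mem : ∀ v, r v ≠ v → v ∈ G.support \ K
  apply_mem : ∀ v, r v ≠ v → r v ∈ G.support \ K
  three_mul_ncard_le : 3 * {v | r v ≠ v}.ncard ≤ G.support.ncard - 2
  planar : Planar (G.map r)

theorem isPlanarFolding_id (hG : Planar G) : IsPlanarFolding G K id := by
  constructor <;> simp [hG]

theorem IsPlanarFolding.anti (hr : IsPlanarFolding G' K r) (hG : G ≤ G')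
    (hsupp : G.support = G'.support) : IsPlanarFolding G K r where
  injOn := hr.injOn
  mem := hsupp ▸ hr.mem
  apply_mem := hsupp ▸ hr.apply_mem
  three_mul_ncard_le := hsupp ▸ hr.three_mul_ncard_le
  planar := hr.planar.of_injective_hom (.ofLE (map_monotone r hG)) Function.injective_id

theorem IsPlanarFolding.apply_of_notMem (hr : IsPlanarFolding G K r) (hv : v ∉ G.support \ K) :
    r v = v :=
  by_contra fun h => hv (hr.mem v h)

theorem IsPlanarFolding.eq_of_apply_eq (hr : IsPlanarFolding G K r) (hv : v ∉ G.support)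
    (h : r u = r v) : u = v := by
  rw [hr.apply_of_notMem fun hv' => hv hv'.1] at h
  by_contra huv
  exact hv (h ▸ (hr.apply_mem u fun hu => huv (hu ▸ h)).1)

theorem IsPlanarFolding.support_map_subset (hr : IsPlanarFolding G K r) :
    (G.map r).support ⊆ G.support := by
  rintro v hv
  obtain ⟨u, hu, rfl⟩ := support_map_subset_image r hv
  by_cases hru : r u = u
  exacts [hru.symm ▸ hu, (hr.apply_mem u hru).1]

theorem IsMinor.of_map_of_isClique {α : Type*} {H : SimpleGraph α} {f : V → W}
    (h : IsMinor H (G.map f)) (hH : H.support = Set.univ) (hK : G.IsClique K)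
    (hf : ∀ u ∈ G.support, ∀ v ∈ G.support, f u = f v → u ≠ v → u ∈ K) : IsMinor H G := by
  refine h.of_map hH fun u hu => ?_
  have : Nonempty {v | v ∈ G.support ∧ f v = f u} := ⟨⟨u, hu, rfl⟩⟩
  rw [induce_eq_top.2]
  · exact connected_top
  rintro v ⟨hv, hvu⟩ v' ⟨hv', hvu'⟩ hvv'
  have heq : f v = f v' := hvu.trans hvu'.symm
  exact hK (hf v hv v' hv' heq hvv') (hf v' hv' v hv heq.symm hvv'.symm) hvv'

theorem IsPlanarFolding.isMinor_or_isMinor_of_map_sup {α : Type*} {H : SimpleGraph α}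
    (hr : IsPlanarFolding G₁ L r) (hH : IsKConnected 3 H) (hK : K.encard ≤ 2)
    (hsupp : G₁.support ∩ G₂.support ⊆ K) (hK₁ : G₁.IsClique K) (hK₂ : G₂.IsClique K)
    (h : IsMinor H ((G₁ ⊔ G₂).map r)) : IsMinor H (G₁.map r) ∨ IsMinor H G₂ := by
  have hsupp' : (G₁.map r).support ∩ (G₂.map r).support ⊆ r '' K := by
    rintro v ⟨hv₁, hv₂⟩
    obtain ⟨u, hu, rfl⟩ := support_map_subset_image r hv₂
    refine ⟨u, hsupp ⟨by_contra fun hu₁ => ?_, hu⟩, rfl⟩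
    rw [hr.apply_of_notMem fun h => hu₁ h.1] at hv₁
    exact hu₁ (hr.support_map_subset hv₁)
  have hfib : ∀ u ∈ G₂.support, ∀ v ∈ G₂.support, r u = r v → u ≠ v → u ∈ K :=
    fun u hu v _ huv hne =>
      hsupp ⟨by_contra fun hu₁ => hne (hr.eq_of_apply_eq hu₁ huv.symm).symm, hu⟩
  rw [graph_map_sup] at h
  have hrK : (r '' K).encard < 3 :=
    (Set.encard_image_le r K).trans_lt (hK.trans_lt (by norm_num))
  refine (hH.isMinor_or_isMinor_of_sup hrK hsupp' (isClique_map r hK₁) (isClique_map r hK₂)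
    h).imp_right fun h => ?_
  exact h.of_map_of_isClique (hH.support_eq_univ Nat.one_lt_ofNat) hK₂ hfib

theorem IsPlanarFolding.planar_map_comp (hr₁ : IsPlanarFolding G₁ L r₁)
    (hr₂ : IsPlanarFolding G₂ K r₂) (hK : K.encard ≤ 2)
    (hsupp : G₁.support ∩ G₂.support ⊆ K) (hK₁ : G₁.IsClique K) (hK₂ : G₂.IsClique K) :
    Planar ((G₁ ⊔ G₂).map (r₁ ∘ r₂)) := by
  have hmap₁ : G₁.map r₂ = G₁ := by
    rw [map_congr_of_eqOn_support (g := id), map_id]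
    exact fun v hv => hr₂.apply_of_notMem fun h => h.2 (hsupp ⟨hv, h.1⟩)
  have hsupp' : G₁.support ∩ (G₂.map r₂).support ⊆ K :=
    (Set.inter_subset_inter_right _ hr₂.support_map_subset).trans hsupp
  have hK₂' : (G₂.map r₂).IsClique K := by
    have hr₂K : ∀ v ∈ K, r₂ v = v := fun v hv => hr₂.apply_of_notMem fun h => h.2 hv
    have := isClique_map r₂ hK₂
    rwa [Set.image_congr hr₂K, Set.image_id'] at this
  rw [← map_map, graph_map_sup r₂, hmap₁]
  exact ⟨fun h => (hr₁.isMinor_or_isMinor_of_map_sup isKConnected_K₅ hK hsupp' hK₁ hK₂' h).elim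
      hr₁.planar.1 hr₂.planar.1,
    fun h => (hr₁.isMinor_or_isMinor_of_map_sup isKConnected_K₃₃ hK hsupp' hK₁ hK₂' h).elim
      hr₁.planar.2 hr₂.planar.2⟩

theorem ncard_support_add_ncard_support_le [Finite V] (hK : K.encard ≤ 2)
    (hsupp : G₁.support ∩ G₂.support ⊆ K) :
    G₁.support.ncard + G₂.support.ncard ≤ (G₁ ⊔ G₂).support.ncard + 2 := by
  have hK' : K.ncard ≤ 2 := by rwa [← Nat.cast_le (α := ℕ∞), K.toFinite.cast_ncard_eq]
  rw [support_sup, ← Set.ncard_union_add_ncard_inter]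
  gcongr
  exact (Set.ncard_le_ncard hsupp).trans hK'

theorem IsPlanarFolding.comp_apply (hr₁ : IsPlanarFolding G₁ L r₁)
    (hr₂ : IsPlanarFolding G₂ K r₂) (hsupp : G₁.support ∩ G₂.support ⊆ K)
    (hv : (r₁ ∘ r₂) v ≠ v) :
    (r₁ v ≠ v ∧ (r₁ ∘ r₂) v = r₁ v) ∨ (r₂ v ≠ v ∧ (r₁ ∘ r₂) v = r₂ v) := by
  by_cases h : r₂ v = v
  · rw [Function.comp_apply, h] at hv ⊢
    exact .inl ⟨hv, rfl⟩
  · exact .inr ⟨h, hr₁.apply_of_notMem fun h₁ =>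
      (hr₂.apply_mem v h).2 (hsupp ⟨h₁.1, (hr₂.apply_mem v h).1⟩)⟩

theorem IsPlanarFolding.comp [Finite V] (hr₁ : IsPlanarFolding G₁ L r₁)
    (hr₂ : IsPlanarFolding G₂ K r₂) (hK : K.encard ≤ 2)
    (hsupp : G₁.support ∩ G₂.support ⊆ K) (hK₁ : G₁.IsClique K) (hK₂ : G₂.IsClique K)
    (hL : L ∩ G₂.support ⊆ K) : IsPlanarFolding (G₁ ⊔ G₂) L (r₁ ∘ r₂) := by
  have hcases {v} := hr₁.comp_apply hr₂ hsupp (v := v)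
  have h₁ : G₁.support \ L ⊆ (G₁ ⊔ G₂).support \ L :=
    Set.sdiff_subset_sdiff_left (support_mono le_sup_left)
  have h₂ : G₂.support \ K ⊆ (G₁ ⊔ G₂).support \ L := fun v hv =>
    ⟨support_mono le_sup_right hv.1, fun hvL => hv.2 (hL ⟨hvL, hv.1⟩)⟩
  have hne : ∀ u ∈ G₁.support \ L, ∀ v ∈ G₂.support \ K, u ≠ v := fun u hu v hv huv =>
    hv.2 (hsupp ⟨huv ▸ hu.1, hv.1⟩)
  refine ⟨fun u hu v hv huv => ?_, fun v hv => ?_, fun v hv => ?_, ?_,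
    hr₁.planar_map_comp hr₂ hK hsupp hK₁ hK₂⟩
  · rcases hcases hu with ⟨hu, hu'⟩ | ⟨hu, hu'⟩ <;> rcases hcases hv with ⟨hv, hv'⟩ | ⟨hv, hv'⟩
    all_goals rw [hu', hv'] at huv
    · exact hr₁.injOn hu hv huv
    · exact (hne _ (hr₁.apply_mem u hu) _ (hr₂.apply_mem v hv) huv).elim
    · exact (hne _ (hr₁.apply_mem v hv) _ (hr₂.apply_mem u hu) huv.symm).elim
    · exact hr₂.injOn hu hv huv
  · exact (hcases hv).elim (fun h => h₁ (hr₁.mem v h.1)) fun h => h₂ (hr₂.mem v h.1)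
  · rcases hcases hv with ⟨h, h'⟩ | ⟨h, h'⟩ <;> rw [h']
    exacts [h₁ (hr₁.apply_mem v h), h₂ (hr₂.apply_mem v h)]
  · have hmoved : {v | (r₁ ∘ r₂) v ≠ v}.ncard ≤ {v | r₁ v ≠ v}.ncard + {v | r₂ v ≠ v}.ncard :=
      (Set.ncard_le_ncard fun v hv => (hcases hv).imp And.left And.left).trans
        (Set.ncard_union_le _ _)
    have hle := ncard_support_add_ncard_support_le hK hsupp
    have hle₁ : G₁.support.ncard ≤ (G₁ ⊔ G₂).support.ncard :=
      Set.ncard_le_ncard (support_mono le_sup_left)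
    have hle₂ : G₂.support.ncard ≤ (G₁ ⊔ G₂).support.ncard :=
      Set.ncard_le_ncard (support_mono le_sup_right)
    have := hr₁.three_mul_ncard_le
    have := hr₂.three_mul_ncard_le
    omega

theorem planar_of_ncard_support_lt [Finite V] (hG : G.support.ncard < 5) : Planar G :=
  ⟨fun h => (h.card_le_ncard_support (isKConnected_K₅.support_eq_univ Nat.one_lt_ofNat)).not_gt
      (by simpa using hG),
    fun h => (h.card_le_ncard_support (isKConnected_K₃₃.support_eq_univ Nat.one_lt_ofNat)).not_gt
      (hG.trans (by simp))⟩

theorem exists_isPlanarFolding_of_ncard_support_eq [Finite V] (hG : G.support.ncard = 5)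
    (hL : L.encard ≤ 2) : ∃ r, IsPlanarFolding G L r := by
  classical
  obtain ⟨c, hc, d, hd, hcd⟩ : (G.support \ L).Nontrivial := by
    have hL' : L.ncard ≤ 2 := by rwa [← Nat.cast_le (α := ℕ∞), L.toFinite.cast_ncard_eq]
    have := Set.le_ncard_sdiff L G.support
    rw [← Set.one_lt_ncard_iff_nontrivial]
    omega
  let r : V → V := Function.update id d c
  have hr : ∀ v, r v ≠ v ↔ v = d := fun v => by
    rcases eq_or_ne v d with rfl | hvd <;> simp [r, *]
  have hrd : r d = c := Function.update_self ..
  have hmoved : {v | r v ≠ v} = {d} := Set.ext hr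
  have hsupp : (G.map r).support ⊆ G.support \ {d} := by
    refine (support_map_subset_image r).trans ?_
    rintro _ ⟨u, hu, rfl⟩
    rcases eq_or_ne u d with rfl | hud
    · exact hrd ▸ ⟨hc.1, hcd⟩
    · rw [not_not.1 (mt (hr u).1 hud)]
      exact ⟨hu, hud⟩
  refine ⟨r, by simp [hmoved], fun v hv => (hr v).1 hv ▸ hd, fun v hv => ?_, ?_, ?_⟩
  · rwa [(hr v).1 hv, hrd]
  · rw [hmoved, Set.ncard_singleton, hG]
  · refine planar_of_ncard_support_lt ((Set.ncard_le_ncard hsupp).trans_lt ?_)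
    exact hG ▸ Set.ncard_sdiff_singleton_lt_of_mem hd.1

theorem isClique_or_isClique_of_sup (hL : (G₁ ⊔ G₂).IsClique L)
    (hsupp : G₁.support ∩ G₂.support ⊆ K) (hK₁ : G₁.IsClique K) (hK₂ : G₂.IsClique K) :
    (G₁.IsClique L ∧ L ∩ G₂.support ⊆ K) ∨ (G₂.IsClique L ∧ L ∩ G₁.support ⊆ K) := by
  have hclique : ∀ {G₁ G₂ : SimpleGraph V}, (G₁ ⊔ G₂).IsClique L → G₁.IsClique K →
      L ∩ G₂.support ⊆ K → G₁.IsClique L := fun hL hK h u hu v hv huv =>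
    (hL hu hv huv).elim id fun h₂ =>
      hK (h ⟨hu, h₂.left_mem_support⟩) (h ⟨hv, h₂.right_mem_support⟩) huv
  by_cases h₂ : L ∩ G₂.support ⊆ K
  · exact .inl ⟨hclique hL hK₁ h₂, h₂⟩
  obtain ⟨v, ⟨hvL, hv₂⟩, hvK⟩ := Set.not_subset.1 h₂
  have h₁ : L ∩ G₁.support ⊆ K := by
    rintro u ⟨huL, hu₁⟩
    rcases eq_or_ne u v with rfl | huv
    · exact hsupp ⟨hu₁, hv₂⟩
    rcases hL huL hvL huv with h | h
    exacts [(hvK (hsupp ⟨h.right_mem_support, hv₂⟩)).elim, hsupp ⟨hu₁, h.left_mem_support⟩]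
  exact .inr ⟨hclique (sup_comm G₁ G₂ ▸ hL) hK₂ h₁, h₁⟩

theorem IsSeparation.ncard_support_lt [Finite V] (h : IsSeparation G G₁ G₂ K) :
    G₁.support.ncard < G.support.ncard := by
  obtain ⟨v, hv, hvK⟩ := h.nonempty_right
  refine Set.ncard_lt_ncard ⟨support_mono (le_sup_left.trans_eq h.sup_eq), fun hle => ?_⟩
  exact hvK (h.support_inter_subset ⟨hle (support_mono (le_sup_right.trans_eq h.sup_eq) hv), hv⟩)

theorem exists_isPlanarFolding_sup [Finite V] (hK : K.encard ≤ 2)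
    (hsupp : G₁.support ∩ G₂.support ⊆ K) (hK₁ : G₁.IsClique K) (hK₂ : G₂.IsClique K)
    (h₁ : ∀ L, G₁.IsClique L → L.encard ≤ 2 → ∃ r, IsPlanarFolding G₁ L r)
    (h₂ : ∀ L, G₂.IsClique L → L.encard ≤ 2 → ∃ r, IsPlanarFolding G₂ L r)
    (hL : (G₁ ⊔ G₂).IsClique L) (hL₂ : L.encard ≤ 2) : ∃ r, IsPlanarFolding (G₁ ⊔ G₂) L r := by
  rcases isClique_or_isClique_of_sup hL hsupp hK₁ hK₂ with ⟨hL₁, hLK⟩ | ⟨hL₁, hLK⟩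
  · obtain ⟨r₁, hr₁⟩ := h₁ L hL₁ hL₂
    obtain ⟨r₂, hr₂⟩ := h₂ K hK₂ hK
    exact ⟨_, hr₁.comp hr₂ hK hsupp hK₁ hK₂ hLK⟩
  · obtain ⟨r₁, hr₁⟩ := h₁ K hK₁ hK
    obtain ⟨r₂, hr₂⟩ := h₂ L hL₁ hL₂
    rw [Set.inter_comm] at hsupp
    rw [sup_comm]
    exact ⟨_, hr₂.comp hr₁ hK hsupp hK₂ hK₁ hLK⟩

theorem exists_isPlanarFolding [Finite V] (hG : ¬ IsMinor K₃₃ G) (hL : G.IsClique L)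
    (hL₂ : L.encard ≤ 2) : ∃ r, IsPlanarFolding G L r := by
  induction h : G.support.ncard using Nat.strong_induction_on generalizing G L with
  | _ n ih =>
  subst h
  by_cases h₅ : IsMinor K₅ G
  swap
  · exact ⟨id, isPlanarFolding_id ⟨h₅, hG⟩⟩
  obtain hcard | ⟨G₁, G₂, x, y, hsep⟩ := ncard_support_eq_five_or_exists_isSeparation hG h₅
  · exact exists_isPlanarFolding_of_ncard_support_eq hcard hL₂
  obtain ⟨G₁, G₂, x, y, hsep, hxy₁, hxy₂⟩ := hsep.exists_reachable
  have hside {G₁ G₂} (hsep : IsSeparation G G₁ G₂ {x, y}) (h₁ : G₁.Reachable x y)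
      (h₂ : G₂.Reachable x y) : ∀ L, (G₁ ⊔ edge x y).IsClique L → L.encard ≤ 2 →
      ∃ r, IsPlanarFolding (G₁ ⊔ edge x y) L r := fun L hL hL₂ =>
    ih _ (support_sup_edge_of_reachable h₁ ▸ hsep.ncard_support_lt)
      (fun h => hG (hsep.sup_eq ▸ h.of_sup_edge (isKConnected_K₃₃.support_eq_univ Nat.one_lt_ofNat)
        hsep.support_inter_subset h₂)) hL hL₂ rfl
  have hclique (G' : SimpleGraph V) : (G' ⊔ edge x y).IsClique {x, y} :=
    isClique_pair.2 fun hxy => .inr ((edge_adj ..).2 ⟨.inl ⟨rfl, rfl⟩, hxy⟩)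
  have hle : G ≤ (G₁ ⊔ edge x y) ⊔ (G₂ ⊔ edge x y) :=
    hsep.sup_eq.ge.trans (sup_le_sup le_sup_left le_sup_left)
  have hK : ({x, y} : Set V).encard ≤ 2 := (Set.encard_insert_le _ _).trans_eq (by norm_num)
  have hs₁ := support_sup_edge_of_reachable hxy₁
  have hs₂ := support_sup_edge_of_reachable hxy₂
  obtain ⟨r, hr⟩ := exists_isPlanarFolding_sup hK
    (by rw [hs₁, hs₂]; exact hsep.support_inter_subset) (hclique G₁) (hclique G₂)
    (hside hsep hxy₁ hxy₂) (hside hsep.symm hxy₂ hxy₁) (hL.mono hle) hL₂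
  refine ⟨r, hr.anti hle ?_⟩
  rw [support_sup, hs₁, hs₂, ← support_sup, hsep.sup_eq]

end Folding

section FiberPartition

variable {V W : Type*} [Fintype V] [DecidableEq V] [DecidableEq W] {p q : Finset V} {u v : V}

/-- The partition of `V` into the nonempty fibers of `r`. -/
def fiberPartition (r : V → W) : Finpartition (Finset.univ : Finset V) :=
  haveI : DecidableRel (Setoid.ker r) := fun u v => inferInstanceAs (Decidable (r u = r v))
  Finpartition.ofSetoid (Setoid.ker r)

theorem apply_eq_apply_of_mem_fiberPartition {r : V → W} (hp : p ∈ (fiberPartition r).parts)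
    (hu : u ∈ p) (hv : v ∈ p) : r u = r v := by
  rw [← Finpartition.part_eq_of_mem _ hp hu] at hv
  exact Finpartition.mem_part_ofSetoid_iff_rel.1 hv

theorem eq_of_apply_eq_of_mem_fiberPartition {r : V → W} (hp : p ∈ (fiberPartition r).parts)
    (hq : q ∈ (fiberPartition r).parts) (hu : u ∈ p) (hv : v ∈ q) (huv : r u = r v) : p = q := by
  refine (fiberPartition r).eq_of_mem_parts hp hq ?_ hv
  rw [← Finpartition.part_eq_of_mem _ hp hu]
  exact Finpartition.mem_part_ofSetoid_iff_rel.2 huv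

theorem card_filter_fixed_le_one {r : V → V} (hp : p ∈ (fiberPartition r).parts) :
    (p.filter fun v => r v = v).card ≤ 1 := by
  simp only [Finset.card_le_one, Finset.mem_filter]
  rintro u ⟨hu, hru⟩ v ⟨hv, hrv⟩
  rw [← hru, ← hrv, apply_eq_apply_of_mem_fiberPartition hp hu hv]

theorem card_le_two_of_mem_fiberPartition {r : V → V} (hr : Set.InjOn r {v | r v ≠ v})
    (hp : p ∈ (fiberPartition r).parts) : p.card ≤ 2 := by
  have hmoved : (p.filter fun v => r v ≠ v).card ≤ 1 := by
    simp only [Finset.card_le_one, Finset.mem_filter]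
    exact fun u hu v hv => hr hu.2 hv.2 (apply_eq_apply_of_mem_fiberPartition hp hu.1 hv.1)
  rw [← Finset.card_filter_add_card_filter_not fun v => r v = v]
  exact add_le_add (card_filter_fixed_le_one hp) hmoved

theorem card_filter_card_eq_two_le (r : V → V) :
    ((fiberPartition r).parts.filter fun p => p.card = 2).card ≤ {v | r v ≠ v}.ncard := by
  rw [Set.ncard_eq_toFinset_card']
  refine Finset.card_le_card_of_surjOn (fiberPartition r).part fun p hp => ?_
  obtain ⟨hp, hp₂⟩ := Finset.mem_filter.1 hp
  obtain ⟨v, hv, hrv⟩ : ∃ v ∈ p, r v ≠ v := by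
    by_contra! h
    have := card_filter_fixed_le_one hp
    rw [Finset.filter_true_of_mem h] at this
    omega
  exact ⟨v, by simpa using hrv, Finpartition.part_eq_of_mem _ hp hv⟩

theorem planar_fiberPartition {G : SimpleGraph V} {r : V → W} (hr : Planar (G.map r)) :
    Planar (SimpleGraph.fromRel fun p q : {p : Finset V // p ∈ (fiberPartition r).parts} =>
      ∃ u ∈ p.1, ∃ v ∈ q.1, G.Adj u v) := by
  choose g hg using fun p : {p // p ∈ (fiberPartition r).parts} =>
    (fiberPartition r).nonempty_of_mem_parts p.2
  have hinj : Function.Injective fun p => r (g p) := fun p q hpq =>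
    Subtype.ext (eq_of_apply_eq_of_mem_fiberPartition p.2 q.2 (hg p) (hg q) hpq)
  have hadj : ∀ p q, p ≠ q → (∃ u ∈ p.1, ∃ v ∈ q.1, G.Adj u v) →
      (G.map r).Adj (r (g p)) (r (g q)) := fun p q hpq ⟨u, hu, v, hv, huv⟩ =>
    ⟨hinj.ne hpq, u, v, huv, apply_eq_apply_of_mem_fiberPartition p.2 hu (hg p),
      apply_eq_apply_of_mem_fiberPartition q.2 hv (hg q)⟩
  refine hr.of_injective_hom ⟨fun p => r (g p), fun {p q} hpq => ?_⟩ hinj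
  obtain ⟨hne, h | h⟩ := hpq
  exacts [hadj p q hne h, (hadj q p hne.symm h).symm]

end FiberPartition

/-- Every `K₃,₃`-minor-free graph `G` has a planar partition of width 2 with at most
`(|V(G)| − 2)/3` bags of cardinality 2 (all other bags singletons): a partition of
`V(G)` into parts of size at most 2 whose quotient graph is planar, with at most
`(|V(G)| − 2)/3` parts of size 2. -/
theorem stmt18 {V : Type*} [Fintype V] [DecidableEq V] (G : SimpleGraph V)
    (hK33 : ¬ IsMinor (completeBipartiteGraph (Fin 3) (Fin 3)) G) :
    ∃ P : Finset (Finset V),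
      (∀ p ∈ P, p.Nonempty) ∧
      (∀ v : V, ∃! p, p ∈ P ∧ v ∈ p) ∧
      (∀ p ∈ P, p.card ≤ 2) ∧
      3 * (P.filter fun p => p.card = 2).card ≤ Fintype.card V - 2 ∧
      Planar (SimpleGraph.fromRel fun p q : {p : Finset V // p ∈ P} =>
        ∃ u ∈ p.1, ∃ v ∈ q.1, G.Adj u v) := by
  obtain ⟨r, hr⟩ := exists_isPlanarFolding (L := ∅) hK33 (by simp) (by simp)
  refine ⟨(fiberPartition r).parts, fun p => (fiberPartition r).nonempty_of_mem_parts,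
    fun v => (fiberPartition r).existsUnique_mem (Finset.mem_univ v),
    fun p => card_le_two_of_mem_fiberPartition hr.injOn, ?_, planar_fiberPartition hr.planar⟩
  calc 3 * ((fiberPartition r).parts.filter fun p => p.card = 2).card
      ≤ 3 * {v | r v ≠ v}.ncard := by gcongr; exact card_filter_card_eq_two_le r
    _ ≤ G.support.ncard - 2 := hr.three_mul_ncard_le
    _ ≤ Fintype.card V - 2 := by
        gcongr
        exact (Set.ncard_le_card _).trans_eq Nat.card_eq_fintype_card
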